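/- arXiv:1805.04598 — 2 statements merged into one kernel-verified Lean document; each statement's English description precedes it below -/
import Mathlib

section
/- Let (m, a) be a monodromy datum. Then 2 · #{n : 1 ≤ n ≤ m − 1 and f(n) = 1} = m + 2 − gcd(a(1), m) − gcd(a(2), m) − gcd(a(3), m), where f(n) = −1 + Σ_{i=1}^{3} ⟨−n·a(i)/m⟩. In particular, m − gcd(a(1), m) − gcd(a(2), m) − gcd(a(3), m) is even, and the genus g(m, a) := 1 + (m − gcd(a(1), m) − gcd(a(2), m) − gcd(a(3), m))/2 equals #{n : 1 ≤ n ≤ m − 1 and f(n) = 1}. -/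
/-- The signature value `f(n) = -1 + ⟨-n·a1/m⟩ + ⟨-n·a2/m⟩ + ⟨-n·a3/m⟩`. -/
def sig (m a1 a2 a3 : ℕ) (n : ℤ) : ℚ :=
  -1 + Int.fract (-(n : ℚ) * a1 / m) + Int.fract (-(n : ℚ) * a2 / m)
    + Int.fract (-(n : ℚ) * a3 / m)

lemma aux_count (m a : ℕ) (hm : 2 ≤ m) :
    ((Finset.Ioo 0 m).filter (fun n : ℕ => m ∣ n * a)).card + 1 = Nat.gcd a m := by
  have hg : 0 < Nat.gcd a m := Nat.gcd_pos_of_pos_right _ (by omega)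
  obtain ⟨k, hk⟩ := Nat.gcd_dvd_right a m
  have hk0 : 0 < k := by
    rcases Nat.eq_zero_or_pos k with h | h
    · subst h; omega
    · exact h
  have hiff : ∀ n : ℕ, m ∣ n * a ↔ k ∣ n := by
    intro n
    obtain ⟨b, hb⟩ := Nat.gcd_dvd_left a m
    have hcop : Nat.Coprime k b := by
      have h := Nat.coprime_div_gcd_div_gcd hg
      rw [Nat.div_eq_of_eq_mul_right hg hb, Nat.div_eq_of_eq_mul_right hg hk] at h
      exact h.symm
    have h1 : n * a = Nat.gcd a m * (n * b) := by
      conv_lhs => rw [hb]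
      ring
    rw [h1]
    conv_lhs => lhs; rw [hk]
    rw [Nat.mul_dvd_mul_iff_left hg]
    exact hcop.dvd_mul_right
  have h2 := Nat.Ioc_filter_dvd_card_eq_div m k
  have h3 : (Finset.Ioc 0 m).filter (fun n => k ∣ n)
      = insert m ((Finset.Ioo 0 m).filter (fun n : ℕ => m ∣ n * a)) := by
    ext n
    simp only [Finset.mem_filter, Finset.mem_Ioc, Finset.mem_Ioo, Finset.mem_insert, hiff]
    constructor
    · rintro ⟨h, h'⟩
      by_cases hn : n = m
      · exact Or.inl hn
      · exact Or.inr ⟨by omega, h'⟩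
    · rintro (h | ⟨h, h'⟩)
      · subst h
        exact ⟨by omega, Dvd.intro_left _ hk.symm⟩
      · exact ⟨by omega, h'⟩
  rw [h3, Finset.card_insert_of_notMem (by simp)] at h2
  rw [h2]
  exact Nat.div_eq_of_eq_mul_left hk0 hk

lemma aux_fract_zero (m a n : ℕ) (hm : 2 ≤ m) :
    Int.fract (-((n : ℤ) : ℚ) * a / m) = 0 ↔ m ∣ n * a := by
  have hm0 : (m : ℚ) ≠ 0 := by positivity
  rw [Int.fract_eq_zero_iff]
  constructor
  · rintro ⟨z, hz⟩
    rw [eq_div_iff hm0] at hz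
    have : (m : ℤ) ∣ ((n * a : ℕ) : ℤ) := by
      refine ⟨-z, ?_⟩
      have : (z * m : ℤ) = -n * a := by exact_mod_cast hz
      push_cast
      linarith
    exact_mod_cast this
  · rintro ⟨k, hk⟩
    refine ⟨-k, ?_⟩
    rw [eq_div_iff hm0]
    have : (n * a : ℚ) = m * k := by exact_mod_cast hk
    push_cast
    linarith

lemma aux_sum (m a : ℕ) (hm : 2 ≤ m) :
    2 * ∑ n ∈ Finset.Ioo 0 m, Int.fract (-((n : ℤ) : ℚ) * a / m)
      = (m : ℚ) - Nat.gcd a m := by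
  have hm0 : (m : ℚ) ≠ 0 := by positivity
  have hrefl : ∑ n ∈ Finset.Ioo 0 m, Int.fract (-((n : ℤ) : ℚ) * a / m)
      = ∑ n ∈ Finset.Ioo 0 m, Int.fract (-(-((n : ℤ) : ℚ) * a / m)) := by
    refine Finset.sum_nbij' (fun n => m - n) (fun n => m - n) ?_ ?_ ?_ ?_ ?_
    · intro n hn; simp only [Finset.mem_Ioo] at *; omega
    · intro n hn; simp only [Finset.mem_Ioo] at *; omega
    · intro n hn; simp only [Finset.mem_Ioo] at *; omega
    · intro n hn; simp only [Finset.mem_Ioo] at *; omega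
    · intro n hn
      simp only [Finset.mem_Ioo] at hn
      have : -(-(((m - n : ℕ) : ℤ) : ℚ) * a / m) = -((n : ℤ) : ℚ) * a / m + (a : ℕ) := by
        push_cast [Nat.cast_sub hn.2.le]
        field_simp
        ring
      rw [this, Int.fract_add_natCast]
  have hpt : ∀ n ∈ Finset.Ioo 0 m, Int.fract (-((n : ℤ) : ℚ) * a / m)
      + Int.fract (-(-((n : ℤ) : ℚ) * a / m)) = 1 - if m ∣ n * a then (1 : ℚ) else 0 := by
    intro n _
    by_cases h : m ∣ n * a
    · have h0 := (aux_fract_zero m a n hm).2 h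
      rw [if_pos h, h0, Int.fract_neg_eq_zero.2 h0]; norm_num
    · rw [if_neg h, Int.fract_neg (fun h0 => h ((aux_fract_zero m a n hm).1 h0))]; ring
  have hc := aux_count m a hm
  have hc' : ((((Finset.Ioo 0 m).filter (fun n : ℕ => m ∣ n * a)).card : ℕ) : ℚ) + 1
      = Nat.gcd a m := by exact_mod_cast hc
  rw [two_mul]
  conv_lhs => rhs; rw [hrefl]
  rw [← Finset.sum_add_distrib, Finset.sum_congr rfl hpt, Finset.sum_sub_distrib,
    Finset.sum_boole, ← hc', Finset.sum_const, Nat.card_Ioo, nsmul_eq_mul,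
    Nat.sub_zero, Nat.cast_sub (by omega)]
  push_cast
  ring

lemma aux_sig (m a1 a2 a3 n : ℕ) (hm : 2 ≤ m)
    (hgcd : Nat.gcd m (Nat.gcd a1 (Nat.gcd a2 a3)) = 1)
    (hsum : (a1 + a2 + a3) % m = 0) (hn : n ∈ Finset.Ioo 0 m) :
    sig m a1 a2 a3 (n : ℤ) = if sig m a1 a2 a3 (n : ℤ) = 1 then 1 else 0 := by
  have hm0 : (m : ℚ) ≠ 0 := by positivity
  simp only [Finset.mem_Ioo] at hn
  obtain ⟨s, hs⟩ := Nat.dvd_of_mod_eq_zero hsum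
  have hs' : (a1 + a2 + a3 : ℚ) = m * s := by exact_mod_cast hs
  have hint : ∃ z : ℤ, sig m a1 a2 a3 (n : ℤ) = z := by
    refine ⟨-1 - n * s - ⌊-((n : ℤ) : ℚ) * a1 / m⌋ - ⌊-((n : ℤ) : ℚ) * a2 / m⌋
      - ⌊-((n : ℤ) : ℚ) * a3 / m⌋, ?_⟩
    have h : -((n : ℤ) : ℚ) * a1 / m + -((n : ℤ) : ℚ) * a2 / m + -((n : ℤ) : ℚ) * a3 / m
        = - n * s := by
      push_cast
      field_simp
      linear_combination -(n:ℚ) * hs'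
    unfold sig Int.fract
    push_cast at h ⊢
    linarith
  obtain ⟨z, hz⟩ := hint
  have p1 := Int.fract_nonneg (-((n : ℤ) : ℚ) * a1 / m)
  have p2 := Int.fract_nonneg (-((n : ℤ) : ℚ) * a2 / m)
  have p3 := Int.fract_nonneg (-((n : ℤ) : ℚ) * a3 / m)
  have q1 := Int.fract_lt_one (-((n : ℤ) : ℚ) * a1 / m)
  have q2 := Int.fract_lt_one (-((n : ℤ) : ℚ) * a2 / m)
  have q3 := Int.fract_lt_one (-((n : ℤ) : ℚ) * a3 / m)
  have hpos : -1 < sig m a1 a2 a3 (n : ℤ) := by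
    by_contra hle
    unfold sig at hle
    have d1 := (aux_fract_zero m a1 n hm).1 (by linarith)
    have d2 := (aux_fract_zero m a2 n hm).1 (by linarith)
    have d3 := (aux_fract_zero m a3 n hm).1 (by linarith)
    have d : m ∣ n * Nat.gcd a1 (Nat.gcd a2 a3) := by
      rw [← Nat.gcd_mul_left, ← Nat.gcd_mul_left]
      exact Nat.dvd_gcd d1 (Nat.dvd_gcd d2 d3)
    have := Nat.le_of_dvd hn.1 (Nat.Coprime.dvd_of_dvd_mul_right hgcd d)
    omega
  have hlt : sig m a1 a2 a3 (n : ℤ) < 2 := by unfold sig; linarith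
  rw [hz] at hpos hlt ⊢
  have h1 : -1 < z := by exact_mod_cast hpos
  have h2 : z < 2 := by exact_mod_cast hlt
  have : z = 0 ∨ z = 1 := by omega
  rcases this with h | h <;> subst h <;> norm_num

/-- For a monodromy datum `(m, a)`,
`2 · #{1 ≤ n ≤ m-1 : f(n) = 1} = m + 2 - gcd(a1,m) - gcd(a2,m) - gcd(a3,m)`
(stated additively); in particular `m - Σ gcd(a(i), m)` is even and the genus
`g = 1 + (m - Σ gcd(a(i), m))/2` equals `#{1 ≤ n ≤ m-1 : f(n) = 1}`. -/
theorem genus_eq_card_signature_one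
    (m a1 a2 a3 : ℕ) (hm : 2 ≤ m)
    (ha1 : 0 < a1) (ha2 : 0 < a2) (ha3 : 0 < a3)
    (hnd1 : ¬ m ∣ a1) (hnd2 : ¬ m ∣ a2) (hnd3 : ¬ m ∣ a3)
    (hgcd : Nat.gcd m (Nat.gcd a1 (Nat.gcd a2 a3)) = 1)
    (hsum : (a1 + a2 + a3) % m = 0) :
    2 * ((Finset.Ioo 0 m).filter (fun n : ℕ => sig m a1 a2 a3 (n : ℤ) = 1)).card
        + (Nat.gcd a1 m + Nat.gcd a2 m + Nat.gcd a3 m) = m + 2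
      ∧ Even ((m : ℤ) - (Nat.gcd a1 m + Nat.gcd a2 m + Nat.gcd a3 m))
      ∧ 1 + ((m : ℤ) - (Nat.gcd a1 m + Nat.gcd a2 m + Nat.gcd a3 m)) / 2
          = ((Finset.Ioo 0 m).filter (fun n : ℕ => sig m a1 a2 a3 (n : ℤ) = 1)).card := by
  have key : 2 * ((Finset.Ioo 0 m).filter (fun n : ℕ => sig m a1 a2 a3 (n : ℤ) = 1)).card
        + (Nat.gcd a1 m + Nat.gcd a2 m + Nat.gcd a3 m) = m + 2 := by
    have h := Finset.sum_congr rfl (fun n hn => aux_sig m a1 a2 a3 n hm hgcd hsum hn)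
    rw [Finset.sum_boole] at h
    have s1 := aux_sum m a1 hm
    have s2 := aux_sum m a2 hm
    have s3 := aux_sum m a3 hm
    simp only [sig, Finset.sum_add_distrib] at h
    rw [Finset.sum_const, Nat.card_Ioo, nsmul_eq_mul, Nat.sub_zero,
      Nat.cast_sub (by omega)] at h
    have hq : (2 * (((Finset.Ioo 0 m).filter
        (fun n : ℕ => sig m a1 a2 a3 (n : ℤ) = 1)).card : ℚ)
        + (Nat.gcd a1 m + Nat.gcd a2 m + Nat.gcd a3 m)) = m + 2 := by
      simp only [sig]
      push_cast at h s1 s2 s3 ⊢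
      linarith
    exact_mod_cast hq
  refine ⟨key, ?_, ?_⟩
  · rw [Int.even_iff]; omega
  · omega
end

section
/- Let (m, a) be a monodromy datum and let O be a finite set of integers n with 1 ≤ n ≤ m − 1 such that: (i) for every n ∈ O, m does not divide n·a(i) for any i ∈ {1, 2, 3}, and (ii) O is closed under negation modulo m, i.e., n ∈ O implies m − n ∈ O. Then 2 · #{n ∈ O : f(n) = 1} = #O, where f(n) = −1 + Σ_{i=1}^{3} ⟨−n·a(i)/m⟩. (This is the combinatorial core of the supersingularity criterion: on a self-dual orbit, the number of signature values equal to 1 is half the orbit size.) -/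
theorem frac_ne (m a n : ℕ) (hm : 2 ≤ m) (h : ¬ m ∣ n * a) :
    Int.fract (-(n : ℚ) * a / m) ≠ 0 := by
  intro h0
  have hm0 : (m : ℚ) ≠ 0 := by positivity
  rw [Int.fract_eq_iff] at h0
  obtain ⟨_, _, z, hz⟩ := h0
  rw [sub_zero, div_eq_iff hm0] at hz
  apply h
  have h2 : ((n * a : ℕ) : ℤ) = m * (-z) := by
    have : (((n * a : ℕ) : ℤ) : ℚ) = ((m * (-z) : ℤ) : ℚ) := by
      push_cast; linarith
    exact_mod_cast this
  exact Int.natCast_dvd_natCast.mp ⟨-z, h2⟩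

theorem frac_dual (m a n : ℕ) (hm : 2 ≤ m) (hn : n ≤ m) (h : ¬ m ∣ n * a) :
    Int.fract (-((m - n : ℕ) : ℚ) * a / m) = 1 - Int.fract (-(n : ℚ) * a / m) := by
  have hm0 : (m : ℚ) ≠ 0 := by positivity
  rw [← Int.fract_neg (frac_ne m a n hm h)]
  have : -((m - n : ℕ) : ℚ) * a / m = -(-(n : ℚ) * a / m) - (a : ℕ) := by
    rw [Nat.cast_sub hn]; field_simp; ring
  rw [this, Int.fract_sub_natCast]

theorem sig_dual (m a1 a2 a3 n : ℕ) (hm : 2 ≤ m) (hn : n ≤ m)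
    (h : ¬ m ∣ n * a1 ∧ ¬ m ∣ n * a2 ∧ ¬ m ∣ n * a3) :
    sig m a1 a2 a3 ((m - n : ℕ) : ℤ) = 1 - sig m a1 a2 a3 (n : ℤ) := by
  unfold sig
  simp only [Int.cast_natCast]
  rw [frac_dual m a1 n hm hn h.1, frac_dual m a2 n hm hn h.2.1, frac_dual m a3 n hm hn h.2.2]
  ring

theorem sig_zero_or_one (m a1 a2 a3 n : ℕ) (hm : 2 ≤ m)
    (hsum : (a1 + a2 + a3) % m = 0)
    (h : ¬ m ∣ n * a1 ∧ ¬ m ∣ n * a2 ∧ ¬ m ∣ n * a3) :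
    sig m a1 a2 a3 (n : ℤ) = 0 ∨ sig m a1 a2 a3 (n : ℤ) = 1 := by
  have hm0 : (m : ℚ) ≠ 0 := by positivity
  obtain ⟨k, hk⟩ := Nat.dvd_of_mod_eq_zero hsum
  have hk' : (a1 : ℚ) + a2 + a3 = m * k := by exact_mod_cast hk
  unfold sig
  simp only [Int.cast_natCast]
  have p1 := lt_of_le_of_ne (Int.fract_nonneg _) (frac_ne m a1 n hm h.1).symm
  have p2 := lt_of_le_of_ne (Int.fract_nonneg _) (frac_ne m a2 n hm h.2.1).symm
  have p3 := lt_of_le_of_ne (Int.fract_nonneg _) (frac_ne m a3 n hm h.2.2).symm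
  have q1 := Int.fract_lt_one (-(n : ℚ) * a1 / m)
  have q2 := Int.fract_lt_one (-(n : ℚ) * a2 / m)
  have q3 := Int.fract_lt_one (-(n : ℚ) * a3 / m)
  have e : -(n : ℚ) * a1 / m + -(n : ℚ) * a2 / m + -(n : ℚ) * a3 / m = -(n * k) := by
    rw [← add_div, ← add_div, div_eq_iff hm0]
    linear_combination (-(n : ℚ)) * hk'
  have f1 := Int.floor_add_fract (-(n : ℚ) * a1 / m)
  have f2 := Int.floor_add_fract (-(n : ℚ) * a2 / m)
  have f3 := Int.floor_add_fract (-(n : ℚ) * a3 / m)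
  obtain ⟨z, hz⟩ : ∃ z : ℤ, -1 + Int.fract (-(n : ℚ) * a1 / m) + Int.fract (-(n : ℚ) * a2 / m)
      + Int.fract (-(n : ℚ) * a3 / m) = z := by
    refine ⟨-1 - n * k - ⌊-(n : ℚ) * a1 / m⌋ - ⌊-(n : ℚ) * a2 / m⌋ - ⌊-(n : ℚ) * a3 / m⌋, ?_⟩
    push_cast
    linarith
  have l : (-1 : ℚ) < z := by linarith
  have u : (z : ℚ) < 2 := by linarith
  have l' : -1 < z := by exact_mod_cast l
  have u' : z < 2 := by exact_mod_cast u
  rw [hz]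
  have : z = 0 ∨ z = 1 := by omega
  exact_mod_cast this

/-- For a monodromy datum `(m, a)` and a set `O` of integers in
`[1, m-1]` such that no `n·a(i)` with `n ∈ O` is divisible by `m` and `O` is closed
under `n ↦ m - n`, exactly half of the elements of `O` have signature value `1`. -/
theorem half_signature_one_on_self_dual
    (m a1 a2 a3 : ℕ) (hm : 2 ≤ m)
    (ha1 : 0 < a1) (ha2 : 0 < a2) (ha3 : 0 < a3)
    (hnd1 : ¬ m ∣ a1) (hnd2 : ¬ m ∣ a2) (hnd3 : ¬ m ∣ a3)
    (hgcd : Nat.gcd m (Nat.gcd a1 (Nat.gcd a2 a3)) = 1)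
    (hsum : (a1 + a2 + a3) % m = 0)
    (O : Finset ℕ)
    (hrange : ∀ n ∈ O, 1 ≤ n ∧ n ≤ m - 1)
    (hdvd : ∀ n ∈ O, ¬ m ∣ n * a1 ∧ ¬ m ∣ n * a2 ∧ ¬ m ∣ n * a3)
    (hclosed : ∀ n ∈ O, m - n ∈ O) :
    2 * (O.filter (fun n : ℕ => sig m a1 a2 a3 (n : ℤ) = 1)).card = O.card := by
  have hc : (O.filter (fun n : ℕ => sig m a1 a2 a3 (n : ℤ) = 1)).card
      = (O.filter (fun n : ℕ => ¬ sig m a1 a2 a3 (n : ℤ) = 1)).card := by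
    apply Finset.card_bij' (fun n _ => m - n) (fun n _ => m - n)
    · intro n hn
      rw [Finset.mem_filter] at hn ⊢
      have := hrange n hn.1
      refine ⟨hclosed n hn.1, ?_⟩
      rw [sig_dual m a1 a2 a3 n hm (by omega) (hdvd n hn.1), hn.2]
      norm_num
    · intro n hn
      rw [Finset.mem_filter] at hn ⊢
      have := hrange n hn.1
      refine ⟨hclosed n hn.1, ?_⟩
      rw [sig_dual m a1 a2 a3 n hm (by omega) (hdvd n hn.1),
        (sig_zero_or_one m a1 a2 a3 n hm hsum (hdvd n hn.1)).resolve_right hn.2]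
      norm_num
    · intro n hn
      have := hrange n (Finset.mem_filter.mp hn).1
      change m - (m - n) = n
      omega
    · intro n hn
      have := hrange n (Finset.mem_filter.mp hn).1
      change m - (m - n) = n
      omega
  have := Finset.card_filter_add_card_filter_not (s := O)
    (fun n : ℕ => sig m a1 a2 a3 (n : ℤ) = 1)
  omega
end
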